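/- For all information structures u and v on K × ℕ × ℕ, the supremum over all payoff functions g ∈ 𝒢 of val(v,g) − val(u,g) equals the minimum over pairs of garblings q₁, q₂ ∈ 𝒬 of ‖q₁.u − v.q₂‖, and this minimum is attained. -/

import Mathlib

open scoped BigOperators ENNReal

namespace ValueDistance

/-- An information structure: a probability distribution on `K × ℕ × ℕ`
(state, signal of player 1, signal of player 2). -/
abbrev InfoStruct (K : Type) := PMF (K × ℕ × ℕ)

/-- A behavior strategy / garbling : a map `ℕ → Δ(ℕ)`. -/
abbrev Garbling : Type := ℕ → PMF ℕ

variable {K : Type}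

/-- `g` is a payoff function with action bound `L` : values in `[-1,1]`,
`g k i j = -1` when `i ≥ L`, and `g k i j = 1` when `i < L` and `j ≥ L`. -/
def IsPayoffL (L : ℕ) (g : K → ℕ → ℕ → ℝ) : Prop :=
  (∀ k i j, g k i j ∈ Set.Icc (-1 : ℝ) 1) ∧
  (∀ k i j, L ≤ i → g k i j = -1) ∧
  (∀ k i j, i < L → L ≤ j → g k i j = 1)

/-- `g` belongs to the set `𝒢` of payoff functions. -/
def IsPayoff (g : K → ℕ → ℕ → ℝ) : Prop := ∃ L, IsPayoffL L g

/-- `g` belongs to the set `𝒢₁` of single-agent (player 1) problems. -/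
def IsPayoff1 (g : K → ℕ → ℕ → ℝ) : Prop :=
  IsPayoff g ∧ ∀ k i j j', g k i j = g k i j'

/-- Expected payoff in the Bayesian game `Γ(u,g)` when player 1 uses the behavior
strategy `σ` and player 2 uses `τ`. -/
noncomputable def payoff (u : InfoStruct K) (g : K → ℕ → ℕ → ℝ)
    (σ τ : Garbling) : ℝ :=
  ∑' (x : K × ℕ × ℕ) (i : ℕ) (j : ℕ),
    (u x).toReal * (σ x.2.1 i).toReal * (τ x.2.2 j).toReal * g x.1 i j

/-- The value `val(u,g)` of the zero-sum Bayesian game `Γ(u,g)`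
(the common value of `sup inf` and `inf sup` of the expected payoff;
we take `sup inf` as the definition). -/
noncomputable def val (u : InfoStruct K) (g : K → ℕ → ℕ → ℝ) : ℝ :=
  ⨆ σ : Garbling, ⨅ τ : Garbling, payoff u g σ τ

/-- Total variation distance `‖u − v‖`. -/
noncomputable def tv {α : Type} (u v : PMF α) : ℝ :=
  ∑' x : α, |(u x).toReal - (v x).toReal|

/-- `q.u` : player 1's signal garbled through `q`. -/
noncomputable def garbleLeft (q : Garbling) (u : InfoStruct K) : InfoStruct K :=
  u.bind (fun x => (q x.2.1).map (fun c => (x.1, c, x.2.2)))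

/-- `u.q` : player 2's signal garbled through `q`. -/
noncomputable def garbleRight (u : InfoStruct K) (q : Garbling) : InfoStruct K :=
  u.bind (fun x => (q x.2.2).map (fun d => (x.1, x.2.1, d)))

/-- The value-based distance `d(u,v) = sup_{g ∈ 𝒢} |val(u,g) − val(v,g)|`. -/
noncomputable def dVal (u v : InfoStruct K) : ℝ :=
  ⨆ g : {g : K → ℕ → ℕ → ℝ // IsPayoff g}, |val u g.1 - val v g.1|

/-- The single-agent distance `d₁(u,v) = sup_{g ∈ 𝒢₁} |val(u,g) − val(v,g)|`. -/
noncomputable def d1 (u v : InfoStruct K) : ℝ :=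
  ⨆ g : {g : K → ℕ → ℕ → ℝ // IsPayoff1 g}, |val u g.1 - val v g.1|

/-- Marginal of an information structure on `K × ℕ` (state, player 1's signal). -/
noncomputable def marg1 (u : InfoStruct K) : PMF (K × ℕ) :=
  u.map (fun x => (x.1, x.2.1))

/-- Garbling of a single-agent information structure:
`(q.w)(k,c) = Σ_s w(k,s)·q(s)({c})`. -/
noncomputable def garble1 (q : Garbling) (w : PMF (K × ℕ)) : PMF (K × ℕ) :=
  w.bind (fun x => (q x.2).map (fun c => (x.1, c)))

/-- Marginal of an information structure on the states. -/
noncomputable def margK (u : InfoStruct K) : PMF K := u.map Prod.fst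

/-- Marginal of an information structure on `K × ℕ` (state, player 2's signal). -/
noncomputable def margKD (u : InfoStruct K) : PMF (K × ℕ) :=
  u.map (fun x => (x.1, x.2.2))

/-- `σ.q` : on signal `c`, draw `c'` according to `q(c)` and play `σ(c')`. -/
noncomputable def compGarble (σ q : Garbling) : Garbling :=
  fun c => (q c).bind σ

/-- `u ∈ 𝒰(L)` : both players' signals are `< L` with probability 1. -/
def InU (L : ℕ) (u : InfoStruct K) : Prop :=
  ∀ x : K × ℕ × ℕ, u x ≠ 0 → x.2.1 < L ∧ x.2.2 < L

/-- `q ∈ 𝒬(L)` : garbling with values supported on `{0,…,L−1}`. -/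
def GarblingIn (L : ℕ) (q : Garbling) : Prop :=
  ∀ n m, q n m ≠ 0 → m < L

/-- The two players' signals are conditionally independent given the state:
`u(k)·u(k,c,d) = u(k,c)·u(k,d)` for all `k, c, d`
(equivalently `u(c,d|k) = u(c|k)·u(d|k)` whenever `u(k) > 0`). -/
def CondIndep (u : InfoStruct K) : Prop :=
  ∀ (k : K) (c d : ℕ),
    (∑' y : ℕ × ℕ, u (k, y)) * u (k, c, d)
      = (∑' d' : ℕ, u (k, c, d')) * (∑' c' : ℕ, u (k, c', d))

end ValueDistance

/-! Weak duality is data processing: garbling her own signal cannot help a player, and payoffs in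
`[-1, 1]` make the value `1`-Lipschitz in total variation, so
`val(v, g) - val(u, g) ≤ val(v.q₂, g) - val(q₁.u, g) ≤ ‖q₁.u - v.q₂‖`.

For the converse, `𝒬.u` and `v.𝒬` are convex subsets of `ℓ¹`. Separating them by Hahn–Banach gives a
bounded function `G` on `K × ℕ × ℕ` whose expectation under `v.τ` exceeds that under `σ.u`, for all
`σ` and `τ`, by at least the `ℓ¹`-distance of the two sets. Let `G` be the payoff of a game whose
actions are signals. If one player reports truthfully, the opponent's strategy becomes a garbling,
so `val(v, G) - val(u, G)` is at least that distance. Forbidding actions `≥ L` turns `G` into an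
element of `𝒢` and costs only the probability that a truthful player draws a signal `≥ L`, which
vanishes as `L → ∞`.

The minimum is attained because `‖P - Q‖ = 2 - 2 ∑ min(P, Q)`: the overlap `∑ min(P, Q)` of `q₁.u`
and `v.q₂` is continuous and monotone on the compact set of pairs of sub-stochastic kernels, and a
sub-stochastic kernel is dominated by a stochastic one. -/

open Filter Metric Topology
open scoped Pointwise

namespace ValueDistance

section Expectation

variable {α β : Type*}

theorem summable_toReal (P : PMF α) : Summable fun x => (P x).toReal :=
  ENNReal.summable_toReal P.tsum_coe_ne_top

theorem tsum_toReal (P : PMF α) : ∑' x, (P x).toReal = 1 := by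
  rw [← ENNReal.tsum_toReal_eq P.apply_ne_top, P.tsum_coe, ENNReal.toReal_one]

theorem exists_toReal_eq_of_hasSum_one {f : α → ℝ} (hf : ∀ x, 0 ≤ f x) (hsum : HasSum f 1) :
    ∃ P : PMF α, ∀ x, (P x).toReal = f x := by
  have hone : HasSum (fun x => ENNReal.ofReal (f x)) 1 := by
    rw [← ENNReal.ofReal_one, ← hsum.tsum_eq, ENNReal.ofReal_tsum_of_nonneg hf hsum.summable]
    exact ENNReal.summable.hasSum
  exact ⟨⟨_, hone⟩, fun x => ENNReal.toReal_ofReal (hf x)⟩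

/-- The expectation of `h` under `P`. The series converges as soon as `h` is bounded, which the
lemmas below assume; otherwise `tsum` may take its junk value `0`. -/
noncomputable def expect (P : PMF α) (h : α → ℝ) : ℝ := ∑' x, (P x).toReal * h x

theorem summable_toReal_mul (P : PMF α) {h : α → ℝ} {C : ℝ} (hh : ∀ x, |h x| ≤ C) :
    Summable fun x => (P x).toReal * h x :=
  Summable.of_norm_bounded ((summable_toReal P).mul_right C) fun x => by
    rw [norm_mul, Real.norm_of_nonneg ENNReal.toReal_nonneg]
    exact mul_le_mul_of_nonneg_left (hh x) ENNReal.toReal_nonneg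

theorem expect_mono (P : PMF α) {h h' : α → ℝ} {C C' : ℝ} (hh : ∀ x, |h x| ≤ C)
    (hh' : ∀ x, |h' x| ≤ C') (hle : ∀ x, h x ≤ h' x) : expect P h ≤ expect P h' :=
  Summable.tsum_le_tsum (fun x => mul_le_mul_of_nonneg_left (hle x) ENNReal.toReal_nonneg)
    (summable_toReal_mul P hh) (summable_toReal_mul P hh')

theorem expect_const (P : PMF α) (c : ℝ) : expect P (fun _ => c) = c := by
  rw [expect, tsum_mul_right, tsum_toReal, one_mul]

theorem expect_add (P : PMF α) {h h' : α → ℝ} {C C' : ℝ} (hh : ∀ x, |h x| ≤ C)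
    (hh' : ∀ x, |h' x| ≤ C') : expect P (fun x => h x + h' x) = expect P h + expect P h' := by
  simp only [expect, mul_add]
  exact (summable_toReal_mul P hh).tsum_add (summable_toReal_mul P hh')

theorem expect_const_mul (P : PMF α) (c : ℝ) (h : α → ℝ) :
    expect P (fun x => c * h x) = c * expect P h := by
  simp only [expect, mul_left_comm _ c, tsum_mul_left]

theorem abs_expect_le (P : PMF α) {h : α → ℝ} {C : ℝ} (hh : ∀ x, |h x| ≤ C) :
    |expect P h| ≤ C := by
  have hconst (c : ℝ) : ∀ _ : α, |c| ≤ |c| := fun _ => le_rfl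
  refine abs_le.2 ⟨?_, ?_⟩
  · simpa only [expect_const] using
      expect_mono P (hconst (-C)) hh fun x => (abs_le.1 (hh x)).1
  · simpa only [expect_const] using
      expect_mono P hh (hconst C) fun x => (abs_le.1 (hh x)).2

theorem expect_pure (a : α) (h : α → ℝ) : expect (PMF.pure a) h = h a := by
  classical
  rw [expect, tsum_eq_single a fun b hb => by simp [PMF.pure_apply, hb]]
  simp

theorem expect_bind (P : PMF α) (F : α → PMF β) {h : β → ℝ} {C : ℝ} (hh : ∀ y, |h y| ≤ C) :
    expect (P.bind F) h = expect P fun x => expect (F x) h := by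
  have hbind (y : β) : (P.bind F y).toReal = ∑' x, (P x).toReal * (F x y).toReal := by
    rw [PMF.bind_apply, ENNReal.tsum_toReal_eq fun x =>
      ENNReal.mul_ne_top (P.apply_ne_top _) ((F x).apply_ne_top _)]
    simp only [ENNReal.toReal_mul]
  have hnonneg : 0 ≤ fun p : α × β => (P p.1).toReal * (F p.1 p.2).toReal := fun p =>
    mul_nonneg ENNReal.toReal_nonneg ENNReal.toReal_nonneg
  have hjoint : Summable fun p : α × β => (P p.1).toReal * (F p.1 p.2).toReal := by
    rw [summable_prod_of_nonneg hnonneg]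
    refine ⟨fun x => (summable_toReal (F x)).mul_left (P x).toReal, ?_⟩
    simp only [tsum_mul_left, tsum_toReal, mul_one]
    exact summable_toReal P
  have hdom : Summable (Function.uncurry fun x y => (P x).toReal * (F x y).toReal * h y) :=
    Summable.of_norm_bounded (hjoint.mul_right C) fun p => by
      rw [Function.uncurry, norm_mul, Real.norm_of_nonneg (hnonneg p)]
      exact mul_le_mul_of_nonneg_left (hh p.2) (hnonneg p)
  simp only [expect, hbind, ← tsum_mul_right, ← tsum_mul_left]
  rw [hdom.tsum_comm]
  simp only [mul_assoc]

theorem expect_map (P : PMF α) (f : α → β) {h : β → ℝ} {C : ℝ} (hh : ∀ y, |h y| ≤ C) :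
    expect (P.map f) h = expect P fun x => h (f x) := by
  rw [← PMF.bind_pure_comp, expect_bind P _ hh]
  simp only [Function.comp_apply, expect_pure]

theorem expect_comm (P : PMF α) (Q : PMF β) {h : α → β → ℝ} {C : ℝ} (hh : ∀ x y, |h x y| ≤ C) :
    expect P (fun x => expect Q (h x)) = expect Q fun y => expect P (h · y) := by
  have hcomm := congrArg (expect · (Function.uncurry h)) (PMF.bind_comm P Q fun x y => .pure (x, y))
  have hbdd : ∀ z, |Function.uncurry h z| ≤ C := fun z => hh z.1 z.2
  simpa only [expect_bind _ _ hbdd, expect_pure, Function.uncurry_apply_pair] using hcomm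

theorem tendsto_expect {ι : Type*} {l : Filter ι} (P : PMF α) {h : ι → α → ℝ} {h₀ : α → ℝ} {C : ℝ}
    (hh : ∀ n x, |h n x| ≤ C) (hlim : ∀ x, Tendsto (h · x) l (𝓝 (h₀ x))) :
    Tendsto (fun n => expect P (h n)) l (𝓝 (expect P h₀)) :=
  tendsto_tsum_of_dominated_convergence ((summable_toReal P).mul_right C)
    (fun x => (hlim x).const_mul _) <| .of_forall fun n x => by
      rw [norm_mul, Real.norm_of_nonneg ENNReal.toReal_nonneg]
      exact mul_le_mul_of_nonneg_left (hh n x) ENNReal.toReal_nonneg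

theorem abs_ite_one_zero_le_one (p : Prop) [Decidable p] : |if p then (1 : ℝ) else 0| ≤ 1 := by
  split_ifs <;> simp

/-- The probability under `P` that `f ≥ L`. -/
noncomputable def tailProb (P : PMF α) (f : α → ℕ) (L : ℕ) : ℝ :=
  expect P fun x => if L ≤ f x then 1 else 0

theorem expect_le_expect_add_tailProb (P : PMF α) {h h' : α → ℝ} {C : ℝ} (hh : ∀ x, |h x| ≤ C)
    (hh' : ∀ x, |h' x| ≤ C) {f : α → ℕ} {L : ℕ} (hle : ∀ x, f x < L → h x ≤ h' x) :
    expect P h ≤ expect P h' + 2 * C * tailProb P f L := by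
  have htail (x : α) : |2 * C * if L ≤ f x then 1 else 0| ≤ |2 * C| := by
    rw [abs_mul]
    exact mul_le_of_le_one_right (abs_nonneg _) (abs_ite_one_zero_le_one _)
  rw [tailProb, ← expect_const_mul, ← expect_add P hh' htail]
  refine expect_mono P hh (fun x => (abs_add_le _ _).trans (add_le_add (hh' x) (htail x)))
    fun x => ?_
  split_ifs with hx
  · linarith [(abs_le.1 (hh x)).2, (abs_le.1 (hh' x)).1]
  · simpa using hle x (not_le.1 hx)

theorem tendsto_tailProb (P : PMF α) (f : α → ℕ) : Tendsto (tailProb P f) atTop (𝓝 0) := by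
  rw [← expect_const P 0]
  refine tendsto_expect P (fun L x => abs_ite_one_zero_le_one _) fun x => ?_
  refine tendsto_const_nhds.congr' ?_
  filter_upwards [eventually_gt_atTop (f x)] with L hL
  rw [if_neg hL.not_ge]

end Expectation

section TotalVariation

variable {α : Type}

theorem summable_abs_toReal_sub (P Q : PMF α) :
    Summable fun x => |(P x).toReal - (Q x).toReal| :=
  ((summable_toReal P).sub (summable_toReal Q)).abs

theorem abs_expect_sub_expect_le (P Q : PMF α) {h : α → ℝ} {C : ℝ} (hh : ∀ x, |h x| ≤ C) :
    |expect P h - expect Q h| ≤ tv P Q * C := by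
  have hdiff := (summable_toReal_mul P hh).sub (summable_toReal_mul Q hh)
  rw [expect, expect, ← (summable_toReal_mul P hh).tsum_sub (summable_toReal_mul Q hh), tv,
    ← tsum_mul_right]
  refine (norm_tsum_le_tsum_norm hdiff.norm).trans
    (hdiff.norm.tsum_le_tsum (fun x => ?_) ((summable_abs_toReal_sub P Q).mul_right C))
  rw [← sub_mul, norm_mul]
  exact mul_le_mul_of_nonneg_left (hh x) (abs_nonneg _)

theorem tv_eq_two_sub_two_mul_tsum_min (P Q : PMF α) :
    tv P Q = 2 - 2 * ∑' x, min (P x).toReal (Q x).toReal := by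
  have hmin : Summable fun x => min (P x).toReal (Q x).toReal :=
    Summable.of_nonneg_of_le (fun x => le_min ENNReal.toReal_nonneg ENNReal.toReal_nonneg)
      (fun x => min_le_left _ _) (summable_toReal P)
  have habs (a b : ℝ) : |a - b| = a + b - 2 * min a b := by
    rw [← max_sub_min_eq_abs', ← min_add_max a b]; ring
  simp only [tv, habs]
  rw [((summable_toReal P).add (summable_toReal Q)).tsum_sub (hmin.mul_left 2),
    (summable_toReal P).tsum_add (summable_toReal Q), tsum_toReal, tsum_toReal, tsum_mul_left,
    one_add_one_eq_two]

end TotalVariation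

section Separation

open scoped lp

theorem exists_norm_le_one_forall_le_of_convex {E : Type*} [NormedAddCommGroup E]
    [NormedSpace ℝ E] {W : Set E} (hW : Convex ℝ W) {r : ℝ} (hr : ∀ w ∈ W, r ≤ ‖w‖) :
    ∃ f : E →L[ℝ] ℝ, ‖f‖ ≤ 1 ∧ ∀ w ∈ W, r ≤ f w := by
  rcases le_or_gt r 0 with hr0 | hr0
  · exact ⟨0, by simp, fun w _ => by simpa using hr0⟩
  have hdisj : Disjoint (ball (0 : E) r) W :=
    Set.disjoint_left.2 fun w hw hwW => (hr w hwW).not_gt (mem_ball_zero_iff.1 hw)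
  obtain ⟨f, s, hball, hfW⟩ :=
    geometric_hahn_banach_open (convex_ball 0 r) isOpen_ball hW hdisj
  have hs : 0 < s := by simpa using hball 0 (mem_ball_self hr0)
  have hclosed : ∀ z ∈ closedBall (0 : E) r, ‖f z‖ ≤ s := by
    rw [← closure_ball 0 hr0.ne']
    refine closure_minimal (fun z hz => abs_le.2 ⟨?_, (hball z hz).le⟩)
      (isClosed_le f.continuous.norm continuous_const)
    have hneg := hball (-z) (by simpa using hz)
    rw [map_neg] at hneg
    linarith
  have hnorm : ‖f‖ ≤ s / r := f.opNorm_bound_of_ball_bound hr0 s hclosed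
  refine ⟨(r / s) • f, ?_, fun w hw => ?_⟩
  · rw [norm_smul, Real.norm_of_nonneg (by positivity)]
    calc r / s * ‖f‖ ≤ r / s * (s / r) := by gcongr
      _ = 1 := by field_simp
  · calc r = r / s * s := by field_simp
      _ ≤ r / s * f w := by gcongr; exact hfW w hw

theorem exists_abs_le_one_forall_apply_eq_tsum {α : Type*} (f : ℓ¹(α, ℝ) →L[ℝ] ℝ) (hf : ‖f‖ ≤ 1) :
    ∃ G : α → ℝ, (∀ x, |G x| ≤ 1) ∧ ∀ w : ℓ¹(α, ℝ), HasSum (fun x => w x * G x) (f w) := by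
  classical
  refine ⟨fun x => f (lp.single 1 x 1), fun x => ?_, fun w => ?_⟩
  · simpa [lp.norm_single] using f.le_of_opNorm_le hf (lp.single 1 x (1 : ℝ))
  · convert f.hasSum (lp.hasSum_single ENNReal.one_ne_top w) using 2 with x
    rw [← smul_eq_mul, ← map_smul, ← lp.single_smul, smul_eq_mul, mul_one]

/-- The probability distribution `P` as an element of the Banach space `ℓ¹`, whose norm induces
the total variation distance. -/
noncomputable def toL1 {α : Type*} (P : PMF α) : ℓ¹(α, ℝ) :=
  ⟨fun x => (P x).toReal, memℓp_gen (by simpa using summable_toReal P)⟩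

theorem toL1_apply {α : Type*} (P : PMF α) (x : α) : toL1 P x = (P x).toReal := rfl

theorem norm_toL1_sub {α : Type} (P Q : PMF α) : ‖toL1 P - toL1 Q‖ = tv P Q := by
  rw [lp.norm_eq_tsum_rpow (by simp)]
  simp [tv, toL1_apply]

/-- Hahn–Banach in `ℓ¹`, whose dual is the space of bounded functions. -/
theorem exists_forall_le_expect_sub_expect {α : Type} {S T : Set (PMF α)}
    (hS : Convex ℝ (toL1 '' S)) (hT : Convex ℝ (toL1 '' T)) {r : ℝ}
    (hr : ∀ P ∈ S, ∀ Q ∈ T, r ≤ tv P Q) :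
    ∃ G : α → ℝ, (∀ x, |G x| ≤ 1) ∧ ∀ P ∈ S, ∀ Q ∈ T, r ≤ expect Q G - expect P G := by
  have hdist : ∀ w ∈ toL1 '' T - toL1 '' S, r ≤ ‖w‖ := by
    rintro _ ⟨_, ⟨Q, hQ, rfl⟩, _, ⟨P, hP, rfl⟩, rfl⟩
    rw [norm_sub_rev, norm_toL1_sub]
    exact hr P hP Q hQ
  obtain ⟨f, hf, hfr⟩ := exists_norm_le_one_forall_le_of_convex (hT.sub hS) hdist
  obtain ⟨G, hG, hfG⟩ := exists_abs_le_one_forall_apply_eq_tsum f hf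
  have hexpect (P : PMF α) : f (toL1 P) = expect P G := (hfG (toL1 P)).tsum_eq.symm
  refine ⟨G, hG, fun P hP Q hQ => ?_⟩
  rw [← hexpect, ← hexpect, ← map_sub]
  exact hfr _ (Set.sub_mem_sub ⟨Q, hQ, rfl⟩ ⟨P, hP, rfl⟩)

end Separation

section Convexity

variable {α : Type*}

theorem toL1_bind_cond (w : PMF Bool) (P Q : PMF α) :
    toL1 (w.bind fun b => cond b P Q) = (w true).toReal • toL1 P + (w false).toReal • toL1 Q := by
  ext x
  change ((w.bind fun b => cond b P Q) x).toReal =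
    (w true).toReal * (P x).toReal + (w false).toReal * (Q x).toReal
  simp [PMF.bind_apply, ENNReal.toReal_add, ENNReal.mul_ne_top, PMF.apply_ne_top, add_comm]

theorem convex_toL1_image {S : Set (PMF α)}
    (hS : ∀ w : PMF Bool, ∀ P ∈ S, ∀ Q ∈ S, (w.bind fun b => cond b P Q) ∈ S) :
    Convex ℝ (toL1 '' S) := by
  rintro _ ⟨P, hP, rfl⟩ _ ⟨Q, hQ, rfl⟩ a b ha hb hab
  have hsum : HasSum (fun t => cond t a b) 1 := by
    simpa [hab] using hasSum_fintype fun t => cond t a b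
  obtain ⟨w, hw⟩ := exists_toReal_eq_of_hasSum_one (by simp [ha, hb]) hsum
  exact ⟨_, hS w P hP Q hQ, by simp only [toL1_bind_cond, hw, cond_true, cond_false]⟩

end Convexity

section Garbling

variable {K : Type}

theorem expect_garbleLeft (q : Garbling) (u : InfoStruct K) {h : K × ℕ × ℕ → ℝ} {C : ℝ}
    (hh : ∀ x, |h x| ≤ C) :
    expect (garbleLeft q u) h =
      expect u fun x => expect (q x.2.1) fun c => h (x.1, c, x.2.2) := by
  simp only [garbleLeft, expect_bind _ _ hh, expect_map _ _ hh]

theorem expect_garbleRight (u : InfoStruct K) (q : Garbling) {h : K × ℕ × ℕ → ℝ} {C : ℝ}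
    (hh : ∀ x, |h x| ≤ C) :
    expect (garbleRight u q) h =
      expect u fun x => expect (q x.2.2) fun d => h (x.1, x.2.1, d) := by
  simp only [garbleRight, expect_bind _ _ hh, expect_map _ _ hh]

theorem tailProb_garbleLeft (q : Garbling) (u : InfoStruct K) (L : ℕ) :
    tailProb (garbleLeft q u) (·.2.2) L = tailProb u (·.2.2) L := by
  simp only [tailProb, expect_garbleLeft q u fun _ => abs_ite_one_zero_le_one _]
  exact congrArg (expect u) (funext fun x => expect_const (q x.2.1) (if L ≤ x.2.2 then 1 else 0))

theorem tailProb_garbleRight (u : InfoStruct K) (q : Garbling) (L : ℕ) :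
    tailProb (garbleRight u q) (·.2.1) L = tailProb u (·.2.1) L := by
  simp only [tailProb, expect_garbleRight u q fun _ => abs_ite_one_zero_le_one _]
  exact congrArg (expect u) (funext fun x => expect_const (q x.2.2) (if L ≤ x.2.1 then 1 else 0))

theorem garbleLeft_bind {β : Type*} (w : PMF β) (q : β → Garbling) (u : InfoStruct K) :
    garbleLeft (fun c => w.bind fun b => q b c) u = w.bind fun b => garbleLeft (q b) u := by
  simp only [garbleLeft, PMF.map_bind]
  exact PMF.bind_comm _ _ _

theorem garbleRight_bind {β : Type*} (w : PMF β) (u : InfoStruct K) (q : β → Garbling) :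
    garbleRight u (fun d => w.bind fun b => q b d) = w.bind fun b => garbleRight u (q b) := by
  simp only [garbleRight, PMF.map_bind]
  exact PMF.bind_comm _ _ _

theorem convex_toL1_image_range_garbleLeft (u : InfoStruct K) :
    Convex ℝ (toL1 '' Set.range fun q => garbleLeft q u) := by
  refine convex_toL1_image ?_
  rintro w _ ⟨q, rfl⟩ _ ⟨q', rfl⟩
  refine ⟨fun c => w.bind fun b => cond b q q' c, ?_⟩
  simp only [garbleLeft_bind w (cond · q q'), Bool.apply_cond (garbleLeft · u)]

theorem convex_toL1_image_range_garbleRight (u : InfoStruct K) :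
    Convex ℝ (toL1 '' Set.range fun q => garbleRight u q) := by
  refine convex_toL1_image ?_
  rintro w _ ⟨q, rfl⟩ _ ⟨q', rfl⟩
  refine ⟨fun d => w.bind fun b => cond b q q' d, ?_⟩
  simp only [garbleRight_bind w u (cond · q q'), Bool.apply_cond (garbleRight u)]

end Garbling

section Value

variable {K : Type} (u v : InfoStruct K) {g : K → ℕ → ℕ → ℝ}

theorem payoff_eq_expect (g : K → ℕ → ℕ → ℝ) (σ τ : Garbling) :
    payoff u g σ τ =
      expect u fun x => expect (σ x.2.1) fun i => expect (τ x.2.2) fun j => g x.1 i j := by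
  simp only [payoff, expect, mul_assoc, tsum_mul_left]

theorem payoff_pure_left (g : K → ℕ → ℕ → ℝ) (τ : Garbling) :
    payoff u g PMF.pure τ = expect u fun x => expect (τ x.2.2) (g x.1 x.2.1) := by
  simp only [payoff_eq_expect, expect_pure]

theorem payoff_pure_right (g : K → ℕ → ℕ → ℝ) (σ : Garbling) :
    payoff u g σ PMF.pure = expect u fun x => expect (σ x.2.1) fun i => g x.1 i x.2.2 := by
  simp only [payoff_eq_expect, expect_pure]

variable {C : ℝ} (hg : ∀ k i j, |g k i j| ≤ C)
include hg

theorem payoff_garbleLeft (q σ τ : Garbling) :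
    payoff (garbleLeft q u) g σ τ = payoff u g (compGarble σ q) τ := by
  have hτ (k : K) (d i : ℕ) : |expect (τ d) (g k i)| ≤ C := abs_expect_le _ (hg k i)
  simp only [payoff_eq_expect, compGarble, expect_bind _ _ (hτ _ _),
    expect_garbleLeft q u fun x => abs_expect_le (σ x.2.1) (hτ x.1 x.2.2)]

theorem payoff_garbleRight (q σ τ : Garbling) :
    payoff (garbleRight u q) g σ τ = payoff u g σ (compGarble τ q) := by
  have hτ (k : K) (d i : ℕ) : |expect (τ d) (g k i)| ≤ C := abs_expect_le _ (hg k i)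
  simp only [payoff_eq_expect, compGarble, expect_bind _ _ (hg _ _),
    expect_garbleRight u q fun x => abs_expect_le (σ x.2.1) (hτ x.1 x.2.2)]
  exact congrArg (expect u) (funext fun x => (expect_comm _ _ fun i d => hτ x.1 d i).symm)

theorem abs_payoff_le (σ τ : Garbling) : |payoff u g σ τ| ≤ C := by
  rw [payoff_eq_expect]
  exact abs_expect_le _ fun x => abs_expect_le _ fun i => abs_expect_le _ (hg x.1 i)

theorem payoff_sub_payoff_le (σ τ : Garbling) :
    payoff v g σ τ - payoff u g σ τ ≤ tv u v * C := by
  rw [← neg_sub, payoff_eq_expect, payoff_eq_expect]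
  exact (neg_le_abs _).trans <| abs_expect_sub_expect_le u v fun x =>
    abs_expect_le _ fun i => abs_expect_le _ (hg x.1 i)

theorem bddBelow_range_payoff (σ : Garbling) : BddBelow (Set.range (payoff u g σ)) :=
  ⟨-C, Set.forall_mem_range.2 fun τ => (abs_le.1 (abs_payoff_le u hg σ τ)).1⟩

theorem bddAbove_range_iInf_payoff :
    BddAbove (Set.range fun σ => ⨅ τ, payoff u g σ τ) :=
  ⟨C, Set.forall_mem_range.2 fun σ => (ciInf_le (bddBelow_range_payoff u hg σ) PMF.pure).trans
    (abs_le.1 (abs_payoff_le u hg σ _)).2⟩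

theorem iInf_payoff_le_val (σ : Garbling) : ⨅ τ, payoff u g σ τ ≤ val u g :=
  le_ciSup (bddAbove_range_iInf_payoff u hg) σ

theorem val_garbleLeft_le (q : Garbling) : val (garbleLeft q u) g ≤ val u g :=
  ciSup_le fun σ => by
    simpa only [payoff_garbleLeft u hg] using iInf_payoff_le_val u hg (compGarble σ q)

theorem le_val_garbleRight (q : Garbling) : val u g ≤ val (garbleRight u q) g :=
  ciSup_le fun σ => le_trans
    (le_ciInf fun τ => by
      simpa only [payoff_garbleRight u hg] using
        ciInf_le (bddBelow_range_payoff u hg σ) (compGarble τ q))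
    (iInf_payoff_le_val (garbleRight u q) hg σ)

theorem val_sub_val_le_tv_mul : val v g - val u g ≤ tv u v * C := by
  refine sub_le_iff_le_add.2 <| ciSup_le fun σ => ?_
  rw [← sub_le_iff_le_add']
  refine le_trans (le_ciInf fun τ => ?_) (iInf_payoff_le_val u hg σ)
  linarith [payoff_sub_payoff_le u v hg σ τ, ciInf_le (bddBelow_range_payoff v hg σ) τ]

theorem val_sub_val_le_tv_garble_mul (q₁ q₂ : Garbling) :
    val v g - val u g ≤ tv (garbleLeft q₁ u) (garbleRight v q₂) * C := by
  linarith [val_sub_val_le_tv_mul (garbleLeft q₁ u) (garbleRight v q₂) hg,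
    val_garbleLeft_le u hg q₁, le_val_garbleRight v hg q₂]

-- Playing one's own signal as an action turns the opponent's strategy into a garbling.
theorem le_val_sub_val {r : ℝ}
    (hr : ∀ σ τ, r ≤ expect (garbleRight v τ) (fun x => g x.1 x.2.1 x.2.2) -
      expect (garbleLeft σ u) fun x => g x.1 x.2.1 x.2.2) :
    r ≤ val v g - val u g := by
  have hbdd : ∀ x : K × ℕ × ℕ, |g x.1 x.2.1 x.2.2| ≤ C := fun x => hg x.1 x.2.1 x.2.2
  refine le_sub_comm.1 <| ciSup_le fun σ => le_sub_iff_add_le.2 ?_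
  refine le_trans (le_ciInf fun τ => ?_) (iInf_payoff_le_val v hg PMF.pure)
  have huσ := ciInf_le (bddBelow_range_payoff u hg σ) PMF.pure
  rw [payoff_pure_right, ← expect_garbleLeft σ u hbdd] at huσ
  rw [payoff_pure_left, ← expect_garbleRight v τ hbdd]
  linarith [hr σ τ]

end Value

section Truncation

variable {K : Type}

theorem IsPayoff.abs_le_one {g : K → ℕ → ℕ → ℝ} (hg : IsPayoff g) (k : K) (i j : ℕ) :
    |g k i j| ≤ 1 := by
  obtain ⟨L, hL, -⟩ := hg
  exact abs_le.2 (hL k i j)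

/-- The payoff function with action bound `L` that agrees with `G` on actions below `L`. -/
noncomputable def truncate (L : ℕ) (G : K × ℕ × ℕ → ℝ) (k : K) (i j : ℕ) : ℝ :=
  if L ≤ i then -1 else if L ≤ j then 1 else G (k, i, j)

variable {G : K × ℕ × ℕ → ℝ} (hG : ∀ x, |G x| ≤ 1) (L : ℕ)
include hG

theorem isPayoffL_truncate : IsPayoffL L (truncate L G) := by
  refine ⟨fun k i j => ?_, fun k i j hi => if_pos hi,
    fun k i j hi hj => (if_neg hi.not_ge).trans (if_pos hj)⟩
  have := abs_le.1 (hG (k, i, j))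
  rw [truncate]
  split_ifs <;> simp_all

theorem abs_truncate_le_one (x : K × ℕ × ℕ) : |truncate L G x.1 x.2.1 x.2.2| ≤ 1 :=
  IsPayoff.abs_le_one ⟨L, isPayoffL_truncate hG L⟩ _ _ _

theorem expect_truncate_le (P : InfoStruct K) :
    expect P (fun x => truncate L G x.1 x.2.1 x.2.2) ≤ expect P G + 2 * tailProb P (·.2.2) L := by
  have hle (x : K × ℕ × ℕ) (hx : x.2.2 < L) : truncate L G x.1 x.2.1 x.2.2 ≤ G x := by
    rw [truncate, if_neg hx.not_ge]
    split_ifs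
    exacts [(abs_le.1 (hG x)).1, le_rfl]
  simpa using expect_le_expect_add_tailProb P (abs_truncate_le_one hG L) hG hle

theorem expect_le_expect_truncate (P : InfoStruct K) :
    expect P G ≤ expect P (fun x => truncate L G x.1 x.2.1 x.2.2) + 2 * tailProb P (·.2.1) L := by
  have hle (x : K × ℕ × ℕ) (hx : x.2.1 < L) : G x ≤ truncate L G x.1 x.2.1 x.2.2 := by
    rw [truncate, if_neg hx.not_ge]
    split_ifs
    exacts [(abs_le.1 (hG x)).2, le_rfl]
  simpa using expect_le_expect_add_tailProb P hG (abs_truncate_le_one hG L) hle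

theorem sub_tailProb_le_val_truncate_sub_val_truncate (u v : InfoStruct K) {r : ℝ}
    (hr : ∀ σ τ, r ≤ expect (garbleRight v τ) G - expect (garbleLeft σ u) G) :
    r - 2 * (tailProb v (·.2.1) L + tailProb u (·.2.2) L) ≤
      val v (truncate L G) - val u (truncate L G) := by
  refine le_val_sub_val u v (fun k i j => abs_truncate_le_one hG L (k, i, j)) fun σ τ => ?_
  have hu := expect_truncate_le hG L (garbleLeft σ u)
  have hv := expect_le_expect_truncate hG L (garbleRight v τ)
  rw [tailProb_garbleLeft] at hu
  rw [tailProb_garbleRight] at hv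
  linarith [hr σ τ]

end Truncation

section Substochastic

variable {α β : Type*}

/-- The sub-stochastic kernels from `α` to `β`, which unlike the stochastic ones are compact in the
topology of pointwise convergence. Bounding the finite partial sums rather than the `tsum` makes
each kernel summable and the set visibly closed. -/
def substochastic (α β : Type*) : Set (α → β → ℝ) :=
  {q | ∀ a, (∀ b, 0 ≤ q a b) ∧ ∀ s : Finset β, ∑ b ∈ s, q a b ≤ 1}

theorem le_one_of_mem_substochastic {q : α → β → ℝ} (hq : q ∈ substochastic α β) (a : α) (b : β) :
    q a b ≤ 1 := by
  simpa using (hq a).2 {b}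

theorem isCompact_substochastic : IsCompact (substochastic α β) := by
  have hbox : IsCompact (Set.univ.pi fun _ : α => Set.univ.pi fun _ : β => Set.Icc (0 : ℝ) 1) :=
    isCompact_univ_pi fun _ => isCompact_univ_pi fun _ => isCompact_Icc
  refine hbox.of_isClosed_subset ?_ fun q hq a _ b _ =>
    ⟨(hq a).1 b, le_one_of_mem_substochastic hq a b⟩
  simp only [substochastic, Set.ofPred_forall, Set.ofPred_and]
  exact isClosed_iInter fun a =>
    (isClosed_iInter fun b => isClosed_le (by fun_prop) (by fun_prop)).inter
      (isClosed_iInter fun s => isClosed_le (by fun_prop) (by fun_prop))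

theorem toReal_mem_substochastic (q : α → PMF β) :
    (fun a b => (q a b).toReal) ∈ substochastic α β := fun a =>
  ⟨fun _ => ENNReal.toReal_nonneg, fun s => by
    rw [← tsum_toReal (q a)]
    exact (summable_toReal (q a)).sum_le_tsum s fun _ _ => ENNReal.toReal_nonneg⟩

theorem exists_le_toReal_of_mem_substochastic [Nonempty β] {q : α → β → ℝ}
    (hq : q ∈ substochastic α β) : ∃ σ : α → PMF β, ∀ a b, q a b ≤ (σ a b).toReal := by
  classical
  obtain ⟨b₀⟩ := ‹Nonempty β›
  have hdefect (a : α) (b : β) : 0 ≤ if b = b₀ then 1 - ∑' b', q a b' else 0 := by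
    split_ifs
    exacts [sub_nonneg.2 (Real.tsum_le_of_sum_le (hq a).1 (hq a).2), le_rfl]
  have hsum (a : α) :
      HasSum (fun b => q a b + if b = b₀ then 1 - ∑' b', q a b' else 0) 1 := by
    simpa using (summable_of_sum_le (hq a).1 (hq a).2).hasSum.add
      (hasSum_ite_eq b₀ (1 - ∑' b', q a b'))
  choose σ hσ using fun a =>
    exists_toReal_eq_of_hasSum_one (fun b => add_nonneg ((hq a).1 b) (hdefect a b)) (hsum a)
  exact ⟨σ, fun a b => (hσ a b).symm ▸ le_add_of_nonneg_right (hdefect a b)⟩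

end Substochastic

section GarbledMass

variable {K : Type}

/-- The mass that `q.u` gives to `(k, i, j)`, for a possibly only sub-stochastic `q`. -/
noncomputable def garbledMass (u : InfoStruct K) (q : ℕ → ℕ → ℝ) (k : K) (i j : ℕ) : ℝ :=
  ∑' c, (u (k, c, j)).toReal * q c i

theorem garbleLeft_apply (q : Garbling) (u : InfoStruct K) (k : K) (i j : ℕ) :
    (garbleLeft q u (k, i, j)).toReal = garbledMass u (fun c i => (q c i).toReal) k i j := by
  classical
  have hinj : Function.Injective fun c : ℕ => (k, c, j) := fun c c' h => by simpa using h
  have hmap (c : ℕ) : ((q c).map fun c' => (k, c', j)) (k, i, j) = q c i := by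
    simp [PMF.map_apply]
  have happly : garbleLeft q u (k, i, j) = ∑' c, u (k, c, j) * q c i := by
    rw [garbleLeft, PMF.bind_apply, ← hinj.tsum_eq]
    · simp only [hmap]
    · rintro ⟨k', c, j'⟩ hx
      obtain ⟨c', -, hc'⟩ := (PMF.mem_support_map_iff _ _ _).1 (right_ne_zero_of_mul hx)
      simp only [Prod.mk.injEq] at hc'
      exact ⟨c, by simp [hc'.1, hc'.2.2]⟩
  rw [happly, ENNReal.tsum_toReal_eq fun c =>
    ENNReal.mul_ne_top (u.apply_ne_top _) ((q c).apply_ne_top _)]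
  simp only [ENNReal.toReal_mul, garbledMass]

/-- Exchanges the roles of the two players' signals. -/
noncomputable def swapSignals (u : InfoStruct K) : InfoStruct K := u.map (Prod.map id Prod.swap)

theorem swapSignals_apply (u : InfoStruct K) (k : K) (c d : ℕ) :
    swapSignals u (k, c, d) = u (k, d, c) := by
  classical
  rw [swapSignals, PMF.map_apply, tsum_eq_single (k, d, c)]
  · simp
  · rintro ⟨k', d', c'⟩ hne
    exact if_neg fun h => hne (by simp_all)

theorem garbleRight_eq_swapSignals (u : InfoStruct K) (q : Garbling) :
    garbleRight u q = swapSignals (garbleLeft q (swapSignals u)) := by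
  simp only [garbleRight, garbleLeft, swapSignals, PMF.bind_map, PMF.map_bind,
    Function.comp_apply, PMF.map_comp]
  rfl

theorem garbleRight_apply (u : InfoStruct K) (q : Garbling) (k : K) (i j : ℕ) :
    (garbleRight u q (k, i, j)).toReal =
      garbledMass (swapSignals u) (fun d j => (q d j).toReal) k j i := by
  rw [garbleRight_eq_swapSignals, swapSignals_apply, garbleLeft_apply]

theorem margKD_apply (u : InfoStruct K) (k : K) (d : ℕ) :
    (margKD u (k, d)).toReal = ∑' c, (u (k, c, d)).toReal := by
  classical
  have hinj : Function.Injective fun c : ℕ => (k, c, d) := fun c c' h => by simpa using h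
  rw [margKD, PMF.map_apply, ← hinj.tsum_eq, ENNReal.tsum_toReal_eq]
  · simp
  · simp [u.apply_ne_top]
  · rintro ⟨k', c, d'⟩ hx
    simp only [Function.mem_support, ne_eq, ite_eq_right_iff, Prod.mk.injEq, not_forall] at hx
    obtain ⟨⟨rfl, rfl⟩, -⟩ := hx
    exact ⟨c, rfl⟩

theorem summable_toReal_signal_left (u : InfoStruct K) (k : K) (d : ℕ) :
    Summable fun c => (u (k, c, d)).toReal :=
  (summable_toReal u).comp_injective fun c c' h => by simpa using h

variable (u : InfoStruct K) {q q' : ℕ → ℕ → ℝ} (hq : q ∈ substochastic ℕ ℕ)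
include hq

theorem summable_toReal_mul_substochastic (k : K) (i j : ℕ) :
    Summable fun c => (u (k, c, j)).toReal * q c i :=
  .of_nonneg_of_le (fun c => mul_nonneg ENNReal.toReal_nonneg ((hq c).1 i))
    (fun c => mul_le_of_le_one_right ENNReal.toReal_nonneg (le_one_of_mem_substochastic hq c i))
    (summable_toReal_signal_left u k j)

theorem garbledMass_nonneg (k : K) (i j : ℕ) : 0 ≤ garbledMass u q k i j :=
  tsum_nonneg fun c => mul_nonneg ENNReal.toReal_nonneg ((hq c).1 i)

theorem garbledMass_mono (hq' : q' ∈ substochastic ℕ ℕ) (hle : ∀ c i, q c i ≤ q' c i) (k : K)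
    (i j : ℕ) : garbledMass u q k i j ≤ garbledMass u q' k i j :=
  Summable.tsum_le_tsum (fun c => mul_le_mul_of_nonneg_left (hle c i) ENNReal.toReal_nonneg)
    (summable_toReal_mul_substochastic u hq k i j) (summable_toReal_mul_substochastic u hq' k i j)

theorem sum_garbledMass_le (s : Finset ℕ) (k : K) (j : ℕ) :
    ∑ i ∈ s, garbledMass u q k i j ≤ (margKD u (k, j)).toReal := by
  have hsummable := fun i (_ : i ∈ s) => summable_toReal_mul_substochastic u hq k i j
  simp only [garbledMass]
  rw [← Summable.tsum_finsetSum hsummable, margKD_apply]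
  refine (summable_sum hsummable).tsum_le_tsum (fun c => ?_) (summable_toReal_signal_left u k j)
  rw [← Finset.mul_sum]
  exact mul_le_of_le_one_right ENNReal.toReal_nonneg ((hq c).2 s)

theorem garbledMass_le (k : K) (i j : ℕ) : garbledMass u q k i j ≤ (margKD u (k, j)).toReal := by
  simpa using sum_garbledMass_le u hq {i} k j

theorem summable_garbledMass (k : K) (j : ℕ) : Summable fun i => garbledMass u q k i j :=
  summable_of_sum_le (fun i => garbledMass_nonneg u hq k i j) fun s => sum_garbledMass_le u hq s k j

theorem tsum_garbledMass_le (k : K) (j : ℕ) :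
    ∑' i, garbledMass u q k i j ≤ (margKD u (k, j)).toReal :=
  Real.tsum_le_of_sum_le (fun i => garbledMass_nonneg u hq k i j) fun s =>
    sum_garbledMass_le u hq s k j

omit hq in
theorem continuousOn_garbledMass (k : K) (i j : ℕ) :
    ContinuousOn (fun q => garbledMass u q k i j) (substochastic ℕ ℕ) := by
  refine continuousOn_tsum (fun c => by fun_prop) (summable_toReal_signal_left u k j)
    fun c q hq => ?_
  rw [Real.norm_of_nonneg (mul_nonneg ENNReal.toReal_nonneg ((hq c).1 i))]
  exact mul_le_of_le_one_right ENNReal.toReal_nonneg (le_one_of_mem_substochastic hq c i)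

end GarbledMass

section Overlap

variable {K : Type} (u w : InfoStruct K)

/-- The mass of `(k, i, j)` common to `q₁.u` and `v.q₂`, where `w = swapSignals v` and `q₁`, `q₂`
are the two components of `p`. -/
noncomputable def overlapMass (p : (ℕ → ℕ → ℝ) × (ℕ → ℕ → ℝ)) (k : K) (i j : ℕ) : ℝ :=
  min (garbledMass u p.1 k i j) (garbledMass w p.2 k j i)

/-- The total mass common to `q₁.u` and `v.q₂`, in the notation of `overlapMass`. The sum is
iterated because the dominating weights depend on `(k, j)` in the inner sum and on `(k, i)` in the
outer one. -/
noncomputable def overlap (p : (ℕ → ℕ → ℝ) × (ℕ → ℕ → ℝ)) : ℝ :=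
  ∑' y : K × ℕ, ∑' j, overlapMass u w p y.1 y.2 j

theorem tv_garble_eq_two_sub_two_mul_overlap (v : InfoStruct K) (q₁ q₂ : Garbling) :
    tv (garbleLeft q₁ u) (garbleRight v q₂) =
      2 - 2 * overlap u (swapSignals v)
        (fun c i => (q₁ c i).toReal, fun d j => (q₂ d j).toReal) := by
  have hmin : Summable fun x => min (garbleLeft q₁ u x).toReal (garbleRight v q₂ x).toReal :=
    .of_nonneg_of_le (fun x => le_min ENNReal.toReal_nonneg ENNReal.toReal_nonneg)
      (fun _ => min_le_left _ _) (summable_toReal (garbleLeft q₁ u))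
  have hsum := ((Equiv.prodAssoc K ℕ ℕ).summable_iff.2 hmin).tsum_prod
  rw [tv_eq_two_sub_two_mul_tsum_min, ← (Equiv.prodAssoc K ℕ ℕ).tsum_eq]
  simp only [Function.comp_apply, Equiv.prodAssoc_apply, garbleLeft_apply,
    garbleRight_apply] at hsum ⊢
  rw [hsum]
  rfl

variable {p p' : (ℕ → ℕ → ℝ) × (ℕ → ℕ → ℝ)} (hp : p ∈ substochastic ℕ ℕ ×ˢ substochastic ℕ ℕ)
include hp

theorem overlapMass_nonneg (k : K) (i j : ℕ) : 0 ≤ overlapMass u w p k i j :=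
  le_min (garbledMass_nonneg u hp.1 k i j) (garbledMass_nonneg w hp.2 k j i)

theorem summable_overlapMass (k : K) (i : ℕ) : Summable (overlapMass u w p k i) :=
  .of_nonneg_of_le (overlapMass_nonneg u w hp k i) (fun _ => min_le_right _ _)
    (summable_garbledMass w hp.2 k i)

theorem tsum_overlapMass_le (k : K) (i : ℕ) :
    ∑' j, overlapMass u w p k i j ≤ (margKD w (k, i)).toReal :=
  ((summable_overlapMass u w hp k i).tsum_le_tsum (fun _ => min_le_right _ _)
    (summable_garbledMass w hp.2 k i)).trans (tsum_garbledMass_le w hp.2 k i)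

theorem summable_tsum_overlapMass :
    Summable fun y : K × ℕ => ∑' j, overlapMass u w p y.1 y.2 j :=
  .of_nonneg_of_le (fun y => tsum_nonneg (overlapMass_nonneg u w hp y.1 y.2))
    (fun y => tsum_overlapMass_le u w hp y.1 y.2) (summable_toReal (margKD w))

theorem overlap_mono (hp' : p' ∈ substochastic ℕ ℕ ×ˢ substochastic ℕ ℕ) (hle : p ≤ p') :
    overlap u w p ≤ overlap u w p' :=
  (summable_tsum_overlapMass u w hp).tsum_le_tsum (fun y =>
    (summable_overlapMass u w hp y.1 y.2).tsum_le_tsum (fun j =>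
      min_le_min (garbledMass_mono u hp.1 hp'.1 hle.1 y.1 y.2 j)
        (garbledMass_mono w hp.2 hp'.2 hle.2 y.1 j y.2))
      (summable_overlapMass u w hp' y.1 y.2))
    (summable_tsum_overlapMass u w hp')

omit hp in
theorem continuousOn_overlap :
    ContinuousOn (overlap u w) (substochastic ℕ ℕ ×ˢ substochastic ℕ ℕ) := by
  refine continuousOn_tsum (fun y => continuousOn_tsum (fun j => ?_)
    ((summable_toReal (margKD u)).comp_injective (Prod.mk_right_injective y.1)) fun j p hp => ?_)
    (summable_toReal (margKD w)) fun y p hp => ?_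
  · exact ((continuousOn_garbledMass u y.1 y.2 j).comp continuousOn_fst fun p hp => hp.1).inf
      ((continuousOn_garbledMass w y.1 j y.2).comp continuousOn_snd fun p hp => hp.2)
  · rw [Real.norm_of_nonneg (overlapMass_nonneg u w hp y.1 y.2 j)]
    exact (min_le_left _ _).trans (garbledMass_le u hp.1 y.1 y.2 j)
  · rw [Real.norm_of_nonneg (tsum_nonneg (overlapMass_nonneg u w hp y.1 y.2))]
    exact tsum_overlapMass_le u w hp y.1 y.2

end Overlap

section Duality

variable {K : Type} (u v : InfoStruct K)

theorem exists_garblings_minimizing_tv : ∃ q₁ q₂ : Garbling, ∀ q₁' q₂' : Garbling,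
    tv (garbleLeft q₁ u) (garbleRight v q₂) ≤ tv (garbleLeft q₁' u) (garbleRight v q₂') := by
  have hmem (σ τ : Garbling) : (fun c i => (σ c i).toReal, fun d j => (τ d j).toReal) ∈
      substochastic ℕ ℕ ×ˢ substochastic ℕ ℕ :=
    ⟨toReal_mem_substochastic σ, toReal_mem_substochastic τ⟩
  obtain ⟨p, hp, hmax⟩ := (isCompact_substochastic.prod isCompact_substochastic).exists_isMaxOn
    ⟨_, hmem PMF.pure PMF.pure⟩ (continuousOn_overlap u (swapSignals v))
  obtain ⟨q₁, hq₁⟩ := exists_le_toReal_of_mem_substochastic hp.1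
  obtain ⟨q₂, hq₂⟩ := exists_le_toReal_of_mem_substochastic hp.2
  refine ⟨q₁, q₂, fun q₁' q₂' => ?_⟩
  rw [tv_garble_eq_two_sub_two_mul_overlap, tv_garble_eq_two_sub_two_mul_overlap]
  linarith [isMaxOn_iff.1 hmax _ (hmem q₁' q₂'),
    overlap_mono u (swapSignals v) hp (hmem q₁ q₂) ⟨hq₁, hq₂⟩]

theorem exists_payoff_forall_sub_tailProb_le_val_sub_val {r : ℝ}
    (hr : ∀ q₁ q₂ : Garbling, r ≤ tv (garbleLeft q₁ u) (garbleRight v q₂)) :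
    ∃ g : ℕ → K → ℕ → ℕ → ℝ, ∀ L, IsPayoffL L (g L) ∧
      r - 2 * (tailProb v (·.2.1) L + tailProb u (·.2.2) L) ≤ val v (g L) - val u (g L) := by
  obtain ⟨G, hG, hrG⟩ := exists_forall_le_expect_sub_expect
    (convex_toL1_image_range_garbleLeft u) (convex_toL1_image_range_garbleRight v)
    (Set.forall_mem_range.2 fun q₁ => Set.forall_mem_range.2 (hr q₁))
  exact ⟨(truncate · G), fun L => ⟨isPayoffL_truncate hG L,
    sub_tailProb_le_val_truncate_sub_val_truncate hG L u v fun σ τ => hrG _ ⟨σ, rfl⟩ _ ⟨τ, rfl⟩⟩⟩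

theorem iSup_val_sub_val_eq_tv {q₁ q₂ : Garbling}
    (hmin : ∀ q₁' q₂' : Garbling,
      tv (garbleLeft q₁ u) (garbleRight v q₂) ≤ tv (garbleLeft q₁' u) (garbleRight v q₂')) :
    (⨆ g : {g : K → ℕ → ℕ → ℝ // IsPayoff g}, (val v g.1 - val u g.1)) =
      tv (garbleLeft q₁ u) (garbleRight v q₂) := by
  obtain ⟨g, hg⟩ := exists_payoff_forall_sub_tailProb_le_val_sub_val u v hmin
  have hle (g : {g : K → ℕ → ℕ → ℝ // IsPayoff g}) :
      val v g.1 - val u g.1 ≤ tv (garbleLeft q₁ u) (garbleRight v q₂) := by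
    simpa using val_sub_val_le_tv_garble_mul u v g.2.abs_le_one q₁ q₂
  have : Nonempty {g : K → ℕ → ℕ → ℝ // IsPayoff g} := ⟨g 0, 0, (hg 0).1⟩
  have hbdd : BddAbove (Set.range fun g : {g : K → ℕ → ℕ → ℝ // IsPayoff g} =>
      val v g.1 - val u g.1) := ⟨_, Set.forall_mem_range.2 hle⟩
  have hlim (r : ℝ) : Tendsto (fun L => r - 2 * (tailProb v (·.2.1) L + tailProb u (·.2.2) L))
      atTop (𝓝 r) := by
    simpa using (((tendsto_tailProb v (·.2.1)).add
      (tendsto_tailProb u (·.2.2))).const_mul 2).const_sub r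
  exact le_antisymm (ciSup_le hle) <| le_of_tendsto (hlim _) <| .of_forall fun L =>
    (hg L).2.trans (le_ciSup hbdd ⟨g L, L, (hg L).1⟩)

end Duality

theorem sup_val_diff_eq_min_garbling_tv_general (K : Type) (u v : InfoStruct K) :
    ∃ q₁ q₂ : Garbling,
      (∀ q₁' q₂' : Garbling,
        tv (garbleLeft q₁ u) (garbleRight v q₂)
          ≤ tv (garbleLeft q₁' u) (garbleRight v q₂')) ∧
      (⨆ g : {g : K → ℕ → ℕ → ℝ // IsPayoff g}, (val v g.1 - val u g.1))
        = tv (garbleLeft q₁ u) (garbleRight v q₂) := by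
  obtain ⟨q₁, q₂, hmin⟩ := exists_garblings_minimizing_tv u v
  exact ⟨q₁, q₂, hmin, iSup_val_sub_val_eq_tv u v hmin⟩

/-- Theorem 1 (first part): for all information structures `u, v`,
`sup_{g ∈ 𝒢} (val(v,g) − val(u,g)) = min_{q₁,q₂ ∈ 𝒬} ‖q₁.u − v.q₂‖`,
and the minimum is attained. -/
theorem sup_val_diff_eq_min_garbling_tv (K : Type) [Fintype K]
    (hK : 2 ≤ Fintype.card K) (u v : InfoStruct K) :
    ∃ q₁ q₂ : Garbling,
      (∀ q₁' q₂' : Garbling,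
        tv (garbleLeft q₁ u) (garbleRight v q₂)
          ≤ tv (garbleLeft q₁' u) (garbleRight v q₂')) ∧
      (⨆ g : {g : K → ℕ → ℕ → ℝ // IsPayoff g}, (val v g.1 - val u g.1))
        = tv (garbleLeft q₁ u) (garbleRight v q₂) :=
  sup_val_diff_eq_min_garbling_tv_general K u v

end ValueDistance
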